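/- arXiv:math/0312001 — 2 statements merged into one kernel-verified Lean document; each statement's English description precedes it below -/
import Mathlib

section
/- Riesz-type sequence: for any normed space V over ℝ or ℂ there is a sequence p₁, p₂, … in the unit sphere of V, of length dim V if V is finite-dimensional and of infinite length otherwise, such that for every m, ‖p_m − q‖ ≥ 1 for all q in the linear span of {p₁, …, p_{m−1}}. -/
noncomputable def rieszSeq {V : Type*} (f : Set V → V) (m : ℕ) : V :=
  f (Set.range fun i : Fin m => rieszSeq f i.1)
termination_by m
decreasing_by exact i.2

theorem riesz_step {𝕜 : Type} [RCLike 𝕜] {V : Type*}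
    [NormedAddCommGroup V] [NormedSpace 𝕜 V] (F : Submodule 𝕜 V) [FiniteDimensional 𝕜 F]
    (hF : F ≠ ⊤) : ∃ u : V, ‖u‖ = 1 ∧ ∀ q ∈ F, 1 ≤ ‖u - q‖ := by
  obtain ⟨x, hx⟩ : ∃ x, x ∉ F := by
    by_contra! h
    exact hF (Submodule.eq_top_iff'.2 h)
  haveI : ProperSpace F := FiniteDimensional.proper 𝕜 F
  obtain ⟨y, hy⟩ : ∃ y : F, ∀ z : F, ‖x - y‖ ≤ ‖x - z‖ := by
    refine Continuous.exists_forall_le (f := fun z : F => ‖x - z‖) (by fun_prop) ?_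
    refine Filter.tendsto_atTop_mono (f := fun z : F => ‖z‖ + -‖x‖) (fun z => ?_)
      (Filter.tendsto_atTop_add_const_right _ _ (tendsto_norm_cocompact_atTop))
    have h := norm_sub_norm_le (z : V) x
    rw [norm_sub_rev] at h
    simpa [sub_eq_add_neg] using h
  have hw : x - y ≠ 0 := fun h => hx (by rw [sub_eq_zero.1 h]; exact y.2)
  have hn : 0 < ‖x - y‖ := norm_pos_iff.2 hw
  have hc : (‖x - y‖ : 𝕜) ≠ 0 := by exact_mod_cast hn.ne'
  refine ⟨(‖x - y‖⁻¹ : 𝕜) • (x - y), norm_smul_inv_norm hw, fun q hq => ?_⟩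
  have h := hy (y + (‖x - y‖ : 𝕜) • ⟨q, hq⟩)
  have e : (‖x - y‖⁻¹ : 𝕜) • (x - y) - q
      = (‖x - y‖⁻¹ : 𝕜) • (x - ((y + (‖x - y‖ : 𝕜) • ⟨q, hq⟩ : F) : V)) := by
    simp only [Submodule.coe_add, Submodule.coe_smul]
    rw [← sub_sub, smul_sub _ (x - (y : V)), smul_smul, inv_mul_cancel₀ hc, one_smul]
  rw [e, norm_smul, norm_inv, RCLike.norm_ofReal, abs_of_pos hn, inv_mul_eq_div]
  exact (one_le_div hn).2 h

/-- Riesz-type sequence: for any normed space `V` over `𝕜 = ℝ` or `ℂ`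
there is a sequence `p₀, p₁, …` in the unit sphere of `V`, of length `dim V` when `V`
is finite-dimensional and infinite otherwise, such that `‖p m − q‖ ≥ 1` for every `m`
and every `q` in the span of the previous terms. -/
theorem exists_riesz_sequence {𝕜 : Type} [RCLike 𝕜] (V : Type*)
    [NormedAddCommGroup V] [NormedSpace 𝕜 V] :
    ∃ p : ℕ → V, ∀ m : ℕ,
      (¬ FiniteDimensional 𝕜 V ∨ m < Module.finrank 𝕜 V) →
        ‖p m‖ = 1 ∧ ∀ q ∈ Submodule.span 𝕜 (p '' Set.Iio m), 1 ≤ ‖p m - q‖ := by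
  have key : ∀ s : Set V, ∃ u : V, s.Finite → Submodule.span 𝕜 s ≠ ⊤ →
      ‖u‖ = 1 ∧ ∀ q ∈ Submodule.span 𝕜 s, 1 ≤ ‖u - q‖ := by
    intro s
    by_cases h : s.Finite ∧ Submodule.span 𝕜 s ≠ ⊤
    · haveI := FiniteDimensional.span_of_finite 𝕜 h.1
      obtain ⟨u, hu⟩ := riesz_step (Submodule.span 𝕜 s) h.2
      exact ⟨u, fun _ _ => hu⟩
    · exact ⟨0, fun h1 h2 => (h ⟨h1, h2⟩).elim⟩
  choose f hf using key
  refine ⟨rieszSeq f, fun m hm => ?_⟩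
  have hs : rieszSeq f '' Set.Iio m = Set.range fun i : Fin m => rieszSeq f i.1 := by
    ext v
    constructor
    · rintro ⟨i, hi, rfl⟩
      exact ⟨⟨i, hi⟩, rfl⟩
    · rintro ⟨i, rfl⟩
      exact ⟨i.1, i.2, rfl⟩
  rw [hs]
  have hp : rieszSeq f m = f (Set.range fun i : Fin m => rieszSeq f i.1) := by
    rw [rieszSeq]
  rw [hp]
  refine hf _ (Set.finite_range _) fun htop => ?_
  rcases hm with hm | hm
  · exact hm (Module.finite_def.2 (htop ▸ Submodule.fg_span (Set.finite_range _)))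
  · have h := finrank_range_le_card (R := 𝕜) (fun i : Fin m => rieszSeq f i.1)
    rw [Set.finrank, htop, finrank_top, Fintype.card_fin] at h
    omega
end

section
/- Subtrivialization at a point: let ({A_t}, Γ) be a continuous field of Banach spaces over a locally compact Hausdorff space T, and let t₀ ∈ T be such that A_{t₀} is separable. Then there exist a normed space V and linear isometric embeddings h_t : A_t → V for every t ∈ T, such that for every continuous section f ∈ Γ the V-valued map t ↦ h_t(f_t) is continuous at t₀. -/
universe u

open Filter Topology

set_option maxHeartbeats 2000000 in
theorem sub_amalg {T : Type u} (A : T → Type u) [∀ t, NormedAddCommGroup (A t)]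
    [∀ t, NormedSpace ℝ (A t)] (A0 : Type u) [NormedAddCommGroup A0] [NormedSpace ℝ A0]
    (E : Type) [NormedAddCommGroup E] [NormedSpace ℝ E]
    (G0 : E →ₗ[ℝ] A0) (G : ∀ t, E →ₗ[ℝ] A t) (δ : T → ℝ) (hδ : ∀ t, 0 ≤ δ t)
    (hG : ∀ t c, |‖G t c‖ - ‖G0 c‖| ≤ δ t * ‖c‖) :
    ∃ (V : Type u) (_ : NormedAddCommGroup V) (_ : NormedSpace ℝ V)
      (h : ∀ t, A t →ₗᵢ[ℝ] V) (b : A0 →ₗ[ℝ] V),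
      (∀ a, ‖b a‖ ≤ ‖a‖) ∧ ∀ t c, ‖h t (G t c) - b (G0 c)‖ ≤ δ t * ‖c‖ := by
  classical
  let B : T → Type u := fun t => WithLp 1 (A t × E)
  let X : Type u := WithLp 1 (A0 × lp B 1)
  let i0 : A0 →ₗ[ℝ] X :=
    (WithLp.linearEquiv 1 ℝ (A0 × lp B 1)).symm.toLinearMap ∘ₗ LinearMap.inl ℝ A0 (lp B 1)
  let i1 : ∀ t, B t →ₗ[ℝ] X := fun t =>
    (WithLp.linearEquiv 1 ℝ (A0 × lp B 1)).symm.toLinearMap ∘ₗ LinearMap.inr ℝ A0 (lp B 1) ∘ₗ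
      lp.lsingle 1 t
  let k0 : ∀ t, A t →ₗ[ℝ] B t := fun t =>
    (WithLp.linearEquiv 1 ℝ (A t × E)).symm.toLinearMap ∘ₗ LinearMap.inl ℝ (A t) E
  let k1 : ∀ t, E →ₗ[ℝ] B t := fun t =>
    (WithLp.linearEquiv 1 ℝ (A t × E)).symm.toLinearMap ∘ₗ LinearMap.inr ℝ (A t) E
  let j : ∀ t, E →ₗ[ℝ] X := fun t =>
    i1 t ∘ₗ (k0 t ∘ₗ G t + δ t • k1 t) - i0 ∘ₗ G0
  let J : (T →₀ E) →ₗ[ℝ] X := Finsupp.lsum ℝ j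
  have i0f : ∀ a, (i0 a).fst = a := fun a => rfl
  have i0s : ∀ a, (i0 a).snd = 0 := fun a => rfl
  have i1f : ∀ t a, (i1 t a).fst = 0 := fun t a => rfl
  have i1s : ∀ t a, (i1 t a).snd = lp.single 1 t a := fun t a => rfl
  have k0f : ∀ t a, (k0 t a).fst = a := fun t a => rfl
  have k0s : ∀ t a, (k0 t a).snd = 0 := fun t a => rfl
  have k1f : ∀ t a, (k1 t a).fst = 0 := fun t a => rfl
  have k1s : ∀ t a, (k1 t a).snd = a := fun t a => rfl
  have Xsf : ∀ x y : X, (x - y).fst = x.fst - y.fst := fun x y => rfl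
  have Xss : ∀ x y : X, (x - y).snd = x.snd - y.snd := fun x y => rfl
  have Baf : ∀ t (x y : B t), (x + y).fst = x.fst + y.fst := fun t x y => rfl
  have Bas : ∀ t (x y : B t), (x + y).snd = x.snd + y.snd := fun t x y => rfl
  have Bmf : ∀ t (r : ℝ) (x : B t), (r • x).fst = r • x.fst := fun t r x => rfl
  have Bms : ∀ t (r : ℝ) (x : B t), (r • x).snd = r • x.snd := fun t r x => rfl
  have hJs : ∀ t e, J (Finsupp.single t e) = i1 t (k0 t (G t e) + δ t • k1 t e) - i0 (G0 e) := by
    intro t e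
    have : J (Finsupp.single t e) = j t e := by simp [J]
    rw [this]; rfl
  have hJ1 : ∀ c : T →₀ E, (J c).fst = - c.sum fun _ e => G0 e := by
    intro c
    induction c using Finsupp.induction_linear with
    | zero => simp
    | add f g hf hg =>
      rw [map_add, WithLp.add_fst, hf, hg, Finsupp.sum_add_index' (by simp) (by simp)]
      abel
    | single t e =>
      rw [hJs, Xsf, i0f, i1f, zero_sub,
        Finsupp.sum_single_index (h := fun _ e => G0 e) (map_zero _)]
  have hJ2 : ∀ (c : T →₀ E) (r : T), (J c).snd r = k0 r (G r (c r)) + δ r • k1 r (c r) := by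
    intro c r
    induction c using Finsupp.induction_linear with
    | zero => simp
    | add f g hf hg =>
      rw [map_add, WithLp.add_snd, lp.coeFn_add, Pi.add_apply, hf, hg]
      simp only [Finsupp.add_apply, map_add, smul_add]
      abel
    | single t e =>
      rw [hJs, Xss, i0s, i1s, sub_zero]
      by_cases htr : r = t
      · subst htr
        rw [lp.single_apply_self, Finsupp.single_eq_same]
      · rw [lp.single_apply_ne _ _ _ htr, Finsupp.single_eq_of_ne htr]
        simp only [map_zero, smul_zero, add_zero]
  have hX : ∀ x : X, ‖x‖ = ‖x.fst‖ + ‖x.snd‖ := fun x => WithLp.prod_norm_eq_of_L1 x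
  have hB : ∀ t (x : B t), ‖x‖ = ‖x.fst‖ + ‖x.snd‖ := fun t x => WithLp.prod_norm_eq_of_L1 x
  have hL : ∀ (x : lp B 1) (s : Finset T), ∑ i ∈ s, ‖x i‖ ≤ ‖x‖ := by
    intro x s
    simpa using lp.sum_rpow_le_norm_rpow (p := 1) (by simp) x s
  have hi0 : ∀ a, ‖i0 a‖ = ‖a‖ := by
    intro a; rw [hX, i0f, i0s, norm_zero, add_zero]
  have hi1 : ∀ t a, ‖i1 t a‖ = ‖a‖ := by
    intro t a; rw [hX, i1f, i1s, norm_zero, zero_add]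
    exact lp.norm_single (by norm_num) t a
  have hk0 : ∀ t a, ‖k0 t a‖ = ‖a‖ := by
    intro t a; rw [hB, k0f, k0s, norm_zero, add_zero]
  have hk1 : ∀ t a, ‖k1 t a‖ = ‖a‖ := by
    intro t a; rw [hB, k1f, k1s, norm_zero, zero_add]
  let S : Submodule ℝ X := LinearMap.range J
  let q : X →ₗ[ℝ] SeparationQuotient (X ⧸ S) :=
    (SeparationQuotient.mkCLM ℝ (X ⧸ S)).toLinearMap ∘ₗ S.mkQ
  have hq : ∀ x, ‖q x‖ = ‖S.mkQ x‖ := fun x => SeparationQuotient.norm_mk _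
  have hqle : ∀ x, ‖q x‖ ≤ ‖x‖ := fun x => by
    rw [hq]; exact Submodule.Quotient.norm_mk_le S x
  have hq0 : ∀ c, q (J c) = 0 := by
    intro c
    have : S.mkQ (J c) = 0 := by
      rw [Submodule.mkQ_apply, Submodule.Quotient.mk_eq_zero]; exact ⟨c, rfl⟩
    simp only [q, LinearMap.comp_apply, this, map_zero]
  have key : ∀ t (a : A t) c, ‖a‖ ≤ ‖i1 t (k0 t a) + J c‖ := by
    intro t a c
    let F := insert t c.support
    have e1 : (i1 t (k0 t a) + J c).fst = - ∑ r ∈ F, G0 (c r) := by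
      rw [WithLp.add_fst, hJ1, Finsupp.sum_of_support_subset c (Finset.subset_insert t _) _ (by simp)]
      rw [i1f, zero_add]
    have e2 : ∀ r, ‖(i1 t (k0 t a) + J c).snd r‖ =
        ‖(Pi.single t a : ∀ r, A r) r + G r (c r)‖ + δ r * ‖c r‖ := by
      intro r
      rw [WithLp.add_snd, lp.coeFn_add, Pi.add_apply, hJ2, hB, i1s]
      have hs : lp.single 1 t (k0 t a) r = k0 r ((Pi.single t a : ∀ r, A r) r) := by
        by_cases htr : r = t
        · subst htr
          rw [lp.single_apply_self, Pi.single_eq_same]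
        · rw [lp.single_apply_ne _ _ _ htr, Pi.single_eq_of_ne htr, map_zero]
      rw [hs, Baf, Baf, Bas, Bas, Bmf, Bms, k0f, k0f, k0s, k0s, k1f, k1s, smul_zero, add_zero,
        zero_add, zero_add, norm_smul, Real.norm_eq_abs, abs_of_nonneg (hδ r)]
    rw [hX, e1, norm_neg]
    have h1 := hL (i1 t (k0 t a) + J c).snd F
    simp only [e2] at h1
    have htF : t ∈ F := Finset.mem_insert_self _ _
    rw [← Finset.add_sum_erase F _ htF] at h1
    rw [← Finset.add_sum_erase F _ htF]
    have h2 : ‖∑ r ∈ F.erase t, G0 (c r)‖ ≤ ∑ r ∈ F.erase t,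
        (‖(Pi.single t a : ∀ r, A r) r + G r (c r)‖ + δ r * ‖c r‖) := by
      refine (norm_sum_le _ _).trans (Finset.sum_le_sum fun r hr => ?_)
      rw [Pi.single_eq_of_ne (Finset.ne_of_mem_erase hr), zero_add]
      have := abs_le.1 (hG r (c r))
      linarith
    rw [Pi.single_eq_same] at h1
    have h3 := abs_le.1 (hG t (c t))
    have h4 : ‖a‖ ≤ ‖a + G t (c t)‖ + ‖G t (c t)‖ := by
      simpa using norm_sub_le (a + G t (c t)) (G t (c t))
    have h5 := norm_sub_le (G0 (c t) + ∑ r ∈ F.erase t, G0 (c r)) (∑ r ∈ F.erase t, G0 (c r))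
    rw [add_sub_cancel_right] at h5
    linarith
  have hiso : ∀ t (a : A t), ‖q (i1 t (k0 t a))‖ = ‖a‖ := by
    intro t a
    apply le_antisymm
    · exact (hqle _).trans (by rw [hi1, hk0])
    · rw [hq]
      refine le_of_forall_pos_lt_add fun ε hε => ?_
      obtain ⟨m, hm, hm'⟩ := Submodule.Quotient.norm_mk_lt (S.mkQ (i1 t (k0 t a))) hε
      rw [Submodule.mkQ_apply, Submodule.Quotient.eq] at hm
      obtain ⟨c, hc⟩ := hm
      have := key t a c
      rw [hc, add_sub_cancel] at this
      exact this.trans_lt hm'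
  refine ⟨SeparationQuotient (X ⧸ S), inferInstance, inferInstance,
    fun t => ⟨q ∘ₗ i1 t ∘ₗ k0 t, hiso t⟩, q ∘ₗ i0, fun a => (hqle _).trans (hi0 a).le, ?_⟩
  intro t c
  have h1 : J (Finsupp.single t c) = i1 t (k0 t (G t c)) + δ t • i1 t (k1 t c) - i0 (G0 c) := by
    rw [hJs, map_add, map_smul]
  have h3 : q (i1 t (k0 t (G t c))) - q (i0 (G0 c)) = q (-(δ t • i1 t (k1 t c))) := by
    have h4 : i1 t (k0 t (G t c)) - i0 (G0 c) =
        J (Finsupp.single t c) + -(δ t • i1 t (k1 t c)) := by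
      rw [h1]; abel
    rw [← map_sub, h4, map_add, hq0, zero_add]
  change ‖q (i1 t (k0 t (G t c))) - q (i0 (G0 c))‖ ≤ _
  rw [h3]
  refine (hqle _).trans ?_
  rw [norm_neg, norm_smul, hi1, hk1, Real.norm_eq_abs, abs_of_nonneg (hδ t)]

theorem sub_uniform {T : Type u} [TopologicalSpace T]
    (A : T → Type u) [∀ t, NormedAddCommGroup (A t)] [∀ t, NormedSpace ℝ (A t)]
    [∀ t, CompleteSpace (A t)] (t₀ : T) (g : ℕ → ∀ t, A t)
    (hg : ∀ n t, ‖g n t‖ ≤ (1 / 2) ^ n)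
    (hc : ∀ (N : ℕ) (x : ℕ → ℝ), Continuous fun t => ‖∑ n ∈ Finset.range N, x n • g n t‖) :
    ∃ (G : ∀ t, BoundedContinuousFunction ℕ ℝ →ₗ[ℝ] A t) (δ : T → ℝ),
      (∀ t c, G t c = ∑' n, c n • g n t) ∧ (∀ t, 0 ≤ δ t) ∧
      (∀ t c, |‖G t c‖ - ‖G t₀ c‖| ≤ δ t * ‖c‖) ∧ Tendsto δ (𝓝 t₀) (𝓝 0) := by
  have hbd : ∀ t (c : BoundedContinuousFunction ℕ ℝ) n, ‖c n • g n t‖ ≤ ‖c‖ * (1 / 2) ^ n := by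
    intro t c n
    rw [norm_smul]
    exact mul_le_mul (c.norm_coe_le_norm n) (hg n t) (norm_nonneg _) (norm_nonneg _)
  have hgeo : Summable fun n : ℕ => ((1 : ℝ) / 2) ^ n := summable_geometric_two
  have hsum : ∀ t (c : BoundedContinuousFunction ℕ ℝ), Summable fun n => c n • g n t :=
    fun t c => Summable.of_norm_bounded (hgeo.mul_left ‖c‖) (hbd t c)
  let G : ∀ t, BoundedContinuousFunction ℕ ℝ →ₗ[ℝ] A t := fun t =>
    { toFun := fun c => ∑' n, c n • g n t
      map_add' := fun c d => by
        simp only [BoundedContinuousFunction.add_apply, add_smul]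
        exact (hsum t c).tsum_add (hsum t d)
      map_smul' := fun r c => by
        simp only [BoundedContinuousFunction.smul_apply, smul_assoc, RingHom.id_apply]
        exact (hsum t c).tsum_const_smul r }
  have hGe : ∀ t c, G t c = ∑' n, c n • g n t := fun t c => rfl
  have hGle : ∀ t c, ‖G t c‖ ≤ ‖c‖ * 2 := fun t c =>
    tsum_of_norm_bounded (hasSum_geometric_two.mul_left ‖c‖) (hbd t c)
  have head : ∀ (N : ℕ) (ε : ℝ), 0 < ε → ∀ᶠ t in 𝓝 t₀,
      ∀ x ∈ Set.pi Set.univ (fun _ : ℕ => Set.Icc (-1 : ℝ) 1),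
      |‖∑ n ∈ Finset.range N, x n • g n t‖ - ‖∑ n ∈ Finset.range N, x n • g n t₀‖| ≤ ε := by
    intro N ε hε
    have hK : IsCompact (Set.pi Set.univ (fun _ : ℕ => Set.Icc (-1 : ℝ) 1)) :=
      isCompact_univ_pi fun _ => isCompact_Icc
    refine hK.eventually_forall_of_forall_eventually (P := fun t x =>
      |‖∑ n ∈ Finset.range N, x n • g n t‖ - ‖∑ n ∈ Finset.range N, x n • g n t₀‖| ≤ ε) ?_
    intro y _
    have hlip : ∀ t (x : ℕ → ℝ), |‖∑ n ∈ Finset.range N, x n • g n t‖ -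
        ‖∑ n ∈ Finset.range N, y n • g n t‖| ≤ ∑ n ∈ Finset.range N, |x n - y n| := by
      intro t x
      refine (abs_norm_sub_norm_le _ _).trans ?_
      rw [← Finset.sum_sub_distrib]
      refine (norm_sum_le _ _).trans (Finset.sum_le_sum fun n _ => ?_)
      rw [← sub_smul, norm_smul, Real.norm_eq_abs]
      refine mul_le_of_le_one_right (abs_nonneg _) ((hg n t).trans ?_)
      exact pow_le_one₀ (by norm_num) (by norm_num)
    have h1 : ∀ᶠ x : ℕ → ℝ in 𝓝 y, ∑ n ∈ Finset.range N, |x n - y n| < ε / 4 := by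
      have : Continuous fun x : ℕ → ℝ => ∑ n ∈ Finset.range N, |x n - y n| := by fun_prop
      refine (this.tendsto y).eventually (gt_mem_nhds ?_)
      simpa using hε
    have h2 : ∀ᶠ t in 𝓝 t₀, |‖∑ n ∈ Finset.range N, y n • g n t‖ -
        ‖∑ n ∈ Finset.range N, y n • g n t₀‖| < ε / 4 := by
      have : Continuous fun t => |‖∑ n ∈ Finset.range N, y n • g n t‖ -
        ‖∑ n ∈ Finset.range N, y n • g n t₀‖| := ((hc N y).sub continuous_const).abs
      refine (this.tendsto t₀).eventually (gt_mem_nhds ?_)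
      simpa using hε
    rw [nhds_prod_eq]
    filter_upwards [h2.prod_mk h1] with z hz
    have a1 := abs_le.1 (hlip z.1 z.2)
    have a2 := abs_le.1 (hlip t₀ z.2)
    have a3 := abs_lt.1 hz.1
    have a4 := hz.2
    rw [abs_le]
    constructor <;> linarith
  have unif1 : ∀ ε : ℝ, 0 < ε → ∀ᶠ t in 𝓝 t₀, ∀ c : BoundedContinuousFunction ℕ ℝ, ‖c‖ ≤ 1 →
      |‖G t c‖ - ‖G t₀ c‖| ≤ ε := by
    intro ε hε
    obtain ⟨N, hN⟩ := exists_pow_lt_of_lt_one (show 0 < ε / 8 by linarith)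
      (show (1 / 2 : ℝ) < 1 by norm_num)
    filter_upwards [head N (ε / 2) (by linarith)] with t ht c hc1
    have hx := ht (fun n => c n) (fun n _ => abs_le.1 ((c.norm_coe_le_norm n).trans hc1))
    have tail : ∀ s, ‖G s c - ∑ n ∈ Finset.range N, c n • g n s‖ ≤ ε / 4 := by
      intro s
      rw [hGe, ← (hsum s c).sum_add_tsum_nat_add N, add_sub_cancel_left]
      refine (tsum_of_norm_bounded (hasSum_geometric_two.mul_left ((1 / 2 : ℝ) ^ N))
        (fun n => (hbd s c (n + N)).trans ?_)).trans (by linarith)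
      rw [pow_add, mul_comm (((1 : ℝ) / 2) ^ n)]
      exact mul_le_of_le_one_left (by positivity) hc1
    have b1 := abs_le.1 ((abs_norm_sub_norm_le _ _).trans (tail t))
    have b2 := abs_le.1 ((abs_norm_sub_norm_le _ _).trans (tail t₀))
    have b3 := abs_le.1 hx
    rw [abs_le]
    constructor <;> linarith
  have unif : ∀ ε : ℝ, 0 < ε → ∀ᶠ t in 𝓝 t₀, ∀ c : BoundedContinuousFunction ℕ ℝ,
      |‖G t c‖ - ‖G t₀ c‖| ≤ ε * ‖c‖ := by
    intro ε hε
    filter_upwards [unif1 ε hε] with t ht c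
    by_cases h0 : c = 0
    · simp [h0]
    have hpos : 0 < ‖c‖ := norm_pos_iff.2 h0
    have := ht (‖c‖⁻¹ • c) (by rw [norm_smul, norm_inv, norm_norm, inv_mul_cancel₀ hpos.ne'])
    rw [map_smul, map_smul, norm_smul, norm_smul, norm_inv, norm_norm, ← mul_sub, abs_mul,
      abs_of_pos (inv_pos.2 hpos), inv_mul_le_iff₀ hpos] at this
    linarith
  let R : T → Set ℝ := fun t => {r | 0 ≤ r ∧ ∀ c, |‖G t c‖ - ‖G t₀ c‖| ≤ r * ‖c‖}
  have hRne : ∀ t, (R t).Nonempty := fun t => ⟨2, by norm_num, fun c => by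
    have a1 := hGle t c
    have a2 := hGle t₀ c
    have a3 := norm_nonneg (G t c)
    have a4 := norm_nonneg (G t₀ c)
    rw [abs_le]
    constructor <;> linarith⟩
  have hRb : ∀ t, BddBelow (R t) := fun t => ⟨0, fun r hr => hr.1⟩
  have hR0 : ∀ t, 0 ≤ sInf (R t) := fun t => Real.sInf_nonneg fun r hr => hr.1
  refine ⟨G, fun t => sInf (R t), hGe, hR0, ?_, ?_⟩
  · intro t c
    by_cases h0 : c = 0
    · simp [h0]
    have hpos : 0 < ‖c‖ := norm_pos_iff.2 h0
    rw [← div_le_iff₀ hpos]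
    exact le_csInf (hRne t) fun r hr => (div_le_iff₀ hpos).2 (hr.2 c)
  · rw [Metric.tendsto_nhds]
    intro ε hε
    filter_upwards [unif (ε / 2) (by linarith)] with t ht
    rw [Real.dist_eq, sub_zero, abs_of_nonneg (hR0 t)]
    have : sInf (R t) ≤ ε / 2 := csInf_le (hRb t) ⟨by linarith, ht⟩
    linarith

theorem subtrivialization_at_point {T : Type u} [TopologicalSpace T]
    [LocallyCompactSpace T] [T2Space T]
    (A : T → Type u) [∀ t, NormedAddCommGroup (A t)] [∀ t, NormedSpace ℝ (A t)]
    [∀ t, CompleteSpace (A t)]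
    (Γ : Set (∀ t, A t))
    (hnorm : ∀ f ∈ Γ, Continuous fun t => ‖f t‖)
    (hadd : ∀ f ∈ Γ, ∀ g ∈ Γ, (fun t => f t + g t) ∈ Γ)
    (hsmul : ∀ f ∈ Γ, ∀ φ : T → ℝ, Continuous φ → (fun t => φ t • f t) ∈ Γ)
    (hdense : ∀ (t : T) (a : A t) (ε : ℝ), 0 < ε → ∃ f ∈ Γ, ‖f t - a‖ < ε)
    (hloc : ∀ g : ∀ t, A t,
      (∀ (t : T) (ε : ℝ), 0 < ε → ∃ U ∈ nhds t, ∃ f ∈ Γ, ∀ t' ∈ U, ‖g t' - f t'‖ ≤ ε) →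
      g ∈ Γ)
    (t₀ : T) [TopologicalSpace.SeparableSpace (A t₀)] :
    ∃ (V : Type u) (_ : NormedAddCommGroup V) (_ : NormedSpace ℝ V)
      (h : ∀ t, A t →ₗᵢ[ℝ] V),
      ∀ f ∈ Γ, ContinuousAt (fun t => h t (f t)) t₀ := by
  have hf : ∀ n : ℕ, ∃ f ∈ Γ,
      ‖f t₀ - TopologicalSpace.denseSeq (A t₀) n.unpair.1‖ < 1 / ((n.unpair.2 : ℝ) + 1) :=
    fun n => hdense t₀ _ _ (by positivity)
  choose f hfΓ hfd using hf
  let g : ℕ → ∀ t, A t := fun n t => ((1 / 2) ^ n * (1 + ‖f n t‖)⁻¹ : ℝ) • f n t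
  have hgΓ : ∀ n, g n ∈ Γ := by
    intro n
    refine hsmul _ (hfΓ n) (fun t => ((1 / 2) ^ n * (1 + ‖f n t‖)⁻¹ : ℝ)) ?_
    exact continuous_const.mul ((continuous_const.add (hnorm _ (hfΓ n))).inv₀
      fun t => (by positivity : (0 : ℝ) < 1 + ‖f n t‖).ne')
  have hg : ∀ n t, ‖g n t‖ ≤ (1 / 2) ^ n := by
    intro n t
    have hp : 0 < 1 + ‖f n t‖ := by positivity
    rw [norm_smul, Real.norm_eq_abs, abs_of_nonneg (by positivity), mul_assoc]
    refine mul_le_of_le_one_right (by positivity) ?_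
    rw [inv_mul_le_iff₀ hp]
    linarith
  have hsum : ∀ (N : ℕ) (x : ℕ → ℝ), (fun t => ∑ n ∈ Finset.range N, x n • g n t) ∈ Γ := by
    intro N x
    induction N with
    | zero =>
      simpa using hsmul _ (hgΓ 0) (fun _ => 0) continuous_const
    | succ N ih =>
      simp only [Finset.sum_range_succ]
      exact hadd _ ih _ (hsmul _ (hgΓ N) (fun _ => x N) continuous_const)
  obtain ⟨G, δ, hGe, hδ, hG, hδt⟩ := sub_uniform A t₀ g hg (fun N x => hnorm _ (hsum N x))
  obtain ⟨V, i1, i2, h, b, hb, hh⟩ := sub_amalg A (A t₀) _ (G t₀) G δ hδ hG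
  have happ : ∀ (a : A t₀) (ε : ℝ), 0 < ε → ∃ c, ‖G t₀ c - a‖ < ε ∧ (fun t => G t c) ∈ Γ := by
    intro a ε hε
    obtain ⟨m, hm⟩ := (TopologicalSpace.denseRange_denseSeq (A t₀)).exists_dist_lt a
      (half_pos hε)
    obtain ⟨k, hk⟩ := exists_nat_one_div_lt (half_pos hε)
    let n := Nat.pair m k
    have hn := hfd n
    simp only [n, Nat.unpair_pair] at hn
    let r : ℝ := ((1 / 2) ^ n * (1 + ‖f n t₀‖)⁻¹)⁻¹
    let c : BoundedContinuousFunction ℕ ℝ :=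
      BoundedContinuousFunction.ofNormedAddCommGroupDiscrete (Pi.single n r) |r| (by
        intro i
        by_cases hi : i = n
        · subst hi; simp
        · simp [Pi.single_eq_of_ne hi])
    have hcn : ∀ i, c i = (Pi.single n r : ℕ → ℝ) i := fun i => rfl
    have hGc : ∀ t, G t c = r • g n t := by
      intro t
      rw [hGe, tsum_eq_single n, hcn, Pi.single_eq_same]
      intro i hi
      rw [hcn, Pi.single_eq_of_ne hi, zero_smul]
    refine ⟨c, ?_, ?_⟩
    · have : G t₀ c = f n t₀ := by
        rw [hGc]
        simp only [g, r]
        rw [smul_smul, inv_mul_cancel₀ (by positivity), one_smul]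
      rw [this]
      rw [dist_eq_norm] at hm
      calc ‖f n t₀ - a‖ ≤ ‖f n t₀ - TopologicalSpace.denseSeq (A t₀) m‖ +
            ‖TopologicalSpace.denseSeq (A t₀) m - a‖ := norm_sub_le_norm_sub_add_norm_sub _ _ _
        _ < ε := by
          rw [norm_sub_rev _ a]
          linarith
    · simp only [hGc]
      exact hsmul _ (hgΓ n) (fun _ => r) continuous_const
  refine ⟨V, i1, i2, h, fun F hF => ?_⟩
  have main : Tendsto (fun t => h t (F t)) (𝓝 t₀) (𝓝 (b (F t₀))) := by
    rw [Metric.tendsto_nhds]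
    intro ε hε
    obtain ⟨c, hc, hcΓ⟩ := happ (F t₀) (ε / 4) (by linarith)
    have hD : Continuous fun t => ‖F t - G t c‖ := by
      have := hnorm _ (hadd _ hF _ (hsmul _ hcΓ (fun _ => -1) continuous_const))
      simpa [← sub_eq_add_neg] using this
    have h1 : ∀ᶠ t in 𝓝 t₀, ‖F t - G t c‖ < ε / 4 :=
      (hD.tendsto t₀).eventually (gt_mem_nhds (by rw [norm_sub_rev]; exact hc))
    have h2 : ∀ᶠ t in 𝓝 t₀, δ t * ‖c‖ < ε / 4 := by
      have := hδt.mul_const ‖c‖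
      rw [zero_mul] at this
      exact this.eventually (gt_mem_nhds (by linarith))
    filter_upwards [h1, h2] with t h1 h2
    rw [dist_eq_norm]
    have e : h t (F t) - b (F t₀) =
        h t (F t - G t c) + (h t (G t c) - b (G t₀ c)) + b (G t₀ c - F t₀) := by
      rw [map_sub, map_sub]; abel
    rw [e]
    have n1 := norm_add₃_le (a := h t (F t - G t c)) (b := h t (G t c) - b (G t₀ c))
      (c := b (G t₀ c - F t₀))
    rw [(h t).norm_map] at n1
    have n2 := hh t c
    have n3 := hb (G t₀ c - F t₀)
    linarith
  exact continuousAt_of_tendsto_nhds main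
end
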